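/- arXiv:2505.08472 — 2 statements merged into one kernel-verified Lean document; each statement's English description precedes it below -/
import Mathlib

section
/- Let ∑_{j≥0} a_j be a formal pseudoanalytic amplitude of order m with constants M_a, C_a, R_a. Let (φ_j) be Ehrenpreis cut-offs in η vanishing for |η| ≤ jρ and equal to 1 for |η| ≥ 2jρ, where ρ > 2R_a and ρ > e·C_a. Then a := a₀ + ∑_{j≥1} φ_j(η/(jρ)) a_j is a pseudoanalytic amplitude of order m, equals a₀ for |η| < ρ, and is a finite realization of ∑ a_j, i.e., |a − ∑_{j ≤ |η|/R} a_j| ≤ C e^{−C^{−1}|η|} for R > ρ. -/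
open Nat

variable {n : ℕ}

/-- Partial derivative in the `η`-variable in direction `eᵢ`. -/
noncomputable def pderivEta {F : Type*} [NormedAddCommGroup F] [NormedSpace ℝ F]
    (i : Fin n) (f : (Fin n → ℝ) → F) : (Fin n → ℝ) → F :=
  fun η => fderiv ℝ f η (Pi.single i 1)

/-- Iterated `η`-derivative along a list of coordinate directions. -/
noncomputable def pderivEtas {F : Type*} [NormedAddCommGroup F] [NormedSpace ℝ F] :
    List (Fin n) → ((Fin n → ℝ) → F) → ((Fin n → ℝ) → F)
  | [], f => f
  | i :: l, f => pderivEta i (pderivEtas l f)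


section helpers
variable {F : Type*} [NormedAddCommGroup F] [NormedSpace ℝ F]

theorem pderivEtas_congr (l : List (Fin n)) {f g : (Fin n → ℝ) → F} {η : Fin n → ℝ}
    (h : f =ᶠ[nhds η] g) : pderivEtas l f =ᶠ[nhds η] pderivEtas l g := by
  induction l with
  | nil => exact h
  | cons i l ih =>
    have := ih.fderiv (𝕜 := ℝ)
    filter_upwards [this] with x hx
    simp only [pderivEtas, pderivEta, hx]

def SmoothOff (f : (Fin n → ℝ) → F) : Prop := ∀ η : Fin n → ℝ, η ≠ 0 → ContDiffAt ℝ (⊤ : ℕ∞) f η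

theorem SmoothOff.pderivEta {f : (Fin n → ℝ) → F} (hf : SmoothOff f) (i : Fin n) :
    SmoothOff (pderivEta i f) := by
  intro η hη
  have := (hf η hη).fderiv_right (m := ((⊤ : ℕ∞) : WithTop ℕ∞)) (by simp)
  exact this.clm_apply contDiffAt_const

theorem SmoothOff.pderivEtas {f : (Fin n → ℝ) → F} (hf : SmoothOff f) (l : List (Fin n)) :
    SmoothOff (pderivEtas l f) := by
  induction l with
  | nil => exact hf
  | cons i l ih => exact ih.pderivEta i

theorem SmoothOff.diff {f : (Fin n → ℝ) → F} (hf : SmoothOff f) {η : Fin n → ℝ} (hη : η ≠ 0) :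
    DifferentiableAt ℝ f η := (hf η hη).differentiableAt (by simp)

theorem eventually_ne_zero' {η : Fin n → ℝ} (hη : η ≠ 0) : ∀ᶠ x in nhds η, x ≠ 0 :=
  isOpen_ne.mem_nhds hη

theorem pderivEtas_zero (l : List (Fin n)) :
    pderivEtas l (fun _ => (0 : F)) = fun _ => 0 := by
  induction l with
  | nil => rfl
  | cons i l ih =>
    funext x
    simp [pderivEtas, pderivEta, ih]

theorem pderivEtas_add (l : List (Fin n)) {f g : (Fin n → ℝ) → F} (hf : SmoothOff f)
    (hg : SmoothOff g) : ∀ η : Fin n → ℝ, η ≠ 0 →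
    pderivEtas l (fun x => f x + g x) η = pderivEtas l f η + pderivEtas l g η := by
  induction l with
  | nil => intro η _; rfl
  | cons i l ih =>
    intro η hη
    have h1 : pderivEtas l (fun x => f x + g x) =ᶠ[nhds η]
        fun x => pderivEtas l f x + pderivEtas l g x := by
      filter_upwards [eventually_ne_zero' hη] with x hx using ih x hx
    simp only [pderivEtas, pderivEta, h1.fderiv_eq]
    rw [fderiv_fun_add ((hf.pderivEtas l).diff hη) ((hg.pderivEtas l).diff hη)]
    rfl

theorem SmoothOff.sum {ι : Type*} (s : Finset ι) {f : ι → (Fin n → ℝ) → F}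
    (hf : ∀ j, SmoothOff (f j)) : SmoothOff (fun x => ∑ j ∈ s, f j x) := by
  intro η hη
  exact ContDiffAt.sum fun j _ => hf j η hη

theorem pderivEtas_sum (l : List (Fin n)) (N : ℕ) {f : ℕ → (Fin n → ℝ) → F}
    (hf : ∀ j, SmoothOff (f j)) (η : Fin n → ℝ) (hη : η ≠ 0) :
    pderivEtas l (fun x => ∑ j ∈ Finset.range N, f j x) η
      = ∑ j ∈ Finset.range N, pderivEtas l (f j) η := by
  induction N with
  | zero => simp [pderivEtas_zero]
  | succ N ih =>
    simp only [Finset.sum_range_succ]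
    rw [pderivEtas_add l (SmoothOff.sum _ hf) (hf N) η hη, ih]

def splits {β : Type*} : List β → List (List β × List β)
  | [] => [([], [])]
  | i :: l => (splits l).map (fun p => (i :: p.1, p.2)) ++ (splits l).map (fun p => (p.1, i :: p.2))

theorem splits_length {β : Type*} (l : List β) : (splits l).length = 2 ^ l.length := by
  induction l with
  | nil => rfl
  | cons i l ih => simp [splits, ih, pow_succ]; ring

theorem splits_count {β : Type*} [DecidableEq β] (l : List β) :
    ∀ p ∈ splits l, (∀ i, p.1.count i + p.2.count i = l.count i) ∧
      p.1.length + p.2.length = l.length := by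
  induction l with
  | nil => intro p hp; simp [splits] at hp; subst hp; simp
  | cons i l ih =>
    intro p hp
    simp only [splits, List.mem_append, List.mem_map] at hp
    rcases hp with ⟨q, hq, rfl⟩ | ⟨q, hq, rfl⟩
    · obtain ⟨h1, h2⟩ := ih q hq
      refine ⟨fun j => ?_, ?_⟩
      · have := h1 j; simp only [List.count_cons]; omega
      · simp only [List.length_cons]; omega
    · obtain ⟨h1, h2⟩ := ih q hq
      refine ⟨fun j => ?_, ?_⟩
      · have := h1 j; simp only [List.count_cons]; omega
      · simp only [List.length_cons]; omega

theorem hasFDerivAt_list_sum {β : Type*} (L : List β) {f : β → (Fin n → ℝ) → F}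
    {η : Fin n → ℝ} (hf : ∀ b ∈ L, DifferentiableAt ℝ (f b) η) (v : Fin n → ℝ) :
    DifferentiableAt ℝ (fun x => (L.map fun b => f b x).sum) η ∧
    fderiv ℝ (fun x => (L.map fun b => f b x).sum) η v = (L.map fun b => fderiv ℝ (f b) η v).sum := by
  induction L with
  | nil => simp
  | cons b L ih =>
    obtain ⟨h1, h2⟩ := ih fun b hb => hf b (List.mem_cons_of_mem _ hb)
    have hb := hf b List.mem_cons_self
    simp only [List.map_cons, List.sum_cons]
    refine ⟨hb.add h1, ?_⟩
    rw [fderiv_fun_add hb h1]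
    simp [h2]

theorem pderivEtas_smul (l : List (Fin n)) {f : (Fin n → ℝ) → ℝ} {g : (Fin n → ℝ) → F}
    (hf : SmoothOff f) (hg : SmoothOff g) : ∀ η : Fin n → ℝ, η ≠ 0 →
    pderivEtas l (fun x => f x • g x) η =
      ((splits l).map fun p => pderivEtas p.1 f η • pderivEtas p.2 g η).sum := by
  induction l with
  | nil => intro η _; simp [splits, pderivEtas]
  | cons i l ih =>
    intro η hη
    have h1 : pderivEtas l (fun x => f x • g x) =ᶠ[nhds η]
        fun x => ((splits l).map fun p => pderivEtas p.1 f x • pderivEtas p.2 g x).sum := by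
      filter_upwards [eventually_ne_zero' hη] with x hx using ih x hx
    have h2 := fun p : List (Fin n) × List (Fin n) => (hf.pderivEtas p.1).diff hη
    have h3 := fun p : List (Fin n) × List (Fin n) => (hg.pderivEtas p.2).diff hη
    simp only [pderivEtas, pderivEta, h1.fderiv_eq]
    rw [(hasFDerivAt_list_sum (splits l)
      (f := fun p x => pderivEtas p.1 f x • pderivEtas p.2 g x)
      (fun p _ => (h2 p).smul (h3 p)) (Pi.single i 1)).2]
    simp only [splits, List.map_append, List.map_map, List.sum_append, ← List.sum_map_add]
    congr 1
    apply List.map_congr_left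
    intro p _
    rw [fderiv_fun_smul (h2 p) (h3 p)]
    simp [pderivEtas, pderivEta, add_comm]

theorem list_norm_sum_le {β : Type*} (L : List β) (f : β → F) (B : ℝ)
    (h : ∀ b ∈ L, ‖f b‖ ≤ B) : ‖(L.map f).sum‖ ≤ L.length * B := by
  induction L with
  | nil => simp
  | cons b L ih =>
    have h1 := ih fun b hb => h b (List.mem_cons_of_mem _ hb)
    have h2 := h b List.mem_cons_self
    simp only [List.map_cons, List.sum_cons, List.length_cons]
    push_cast
    have := norm_add_le (f b) (L.map f).sum
    linarith

end helpers

theorem key_exp (Ca ρ : ℝ) (hCa : 0 < Ca) (hρCa : Real.exp 1 * Ca < ρ) (j : ℕ) (x : ℝ)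
    (hx : (j : ℝ) * ρ ≤ x) (hx0 : 0 < x) : Ca ^ j * (j ! : ℝ) / x ^ j ≤ Real.exp (-(j : ℝ)) := by
  rw [div_le_iff₀ (by positivity)]
  have h1 : (j ! : ℝ) ≤ (j : ℝ) ^ j := by exact_mod_cast Nat.factorial_le_pow j
  have h2 : Real.exp (-(j : ℝ)) = (Real.exp (-1)) ^ j := by
    rw [← Real.exp_nat_mul]; congr 1; ring
  rw [h2, ← mul_pow]
  calc Ca ^ j * (j ! : ℝ) ≤ Ca ^ j * (j : ℝ) ^ j := by gcongr
    _ = (Ca * j) ^ j := by rw [mul_pow]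
    _ ≤ _ := by
      apply pow_le_pow_left₀ (by positivity)
      rw [Real.exp_neg, ← div_eq_inv_mul, le_div_iff₀ (Real.exp_pos _)]
      have : Real.exp 1 * Ca * j ≤ ρ * j := by gcongr
      linarith

theorem pow_length_le (l : List (Fin n)) (ε x : ℝ) (hε : 0 < ε) (hx : 0 ≤ x) :
    x ^ l.length ≤ (ε⁻¹) ^ l.length * (∏ i : Fin n, ((l.count i)! : ℝ)) *
      Real.exp (n * (ε * x)) := by
  have hlen : l.length = ∑ i : Fin n, l.count i := by
    rw [← Multiset.coe_card, ← Multiset.toFinset_sum_count_eq]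
    simp only [Multiset.coe_count]
    apply Finset.sum_subset (Finset.subset_univ _)
    intro i _ hi
    simpa [List.count_eq_zero] using hi
  have h1 : (ε * x) ^ l.length ≤ (∏ i : Fin n, ((l.count i)! : ℝ)) * Real.exp (n * (ε * x)) := by
    rw [hlen, ← Finset.prod_pow_eq_pow_sum]
    have : Real.exp (n * (ε * x)) = ∏ i : Fin n, Real.exp (ε * x) := by
      simp [Real.exp_nat_mul]
    rw [this, ← Finset.prod_mul_distrib]
    apply Finset.prod_le_prod
    · intro i _; positivity
    · intro i _
      have := Real.pow_div_factorial_le_exp (ε * x) (by positivity) (l.count i)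
      rw [div_le_iff₀ (by positivity)] at this
      linarith
  calc x ^ l.length = (ε⁻¹) ^ l.length * (ε * x) ^ l.length := by
        rw [← mul_pow]; congr 1; field_simp
    _ ≤ _ := by rw [mul_assoc]; gcongr

theorem rpow_le_exp (m ρ ε : ℝ) (hρ : 0 < ρ) (hε : 0 < ε) :
    ∃ K : ℝ, 0 < K ∧ ∀ x : ℝ, ρ ≤ x → x ^ m ≤ K * Real.exp (ε * x) := by
  obtain ⟨N, hN⟩ := exists_nat_ge m
  refine ⟨ρ ^ m * (ρ⁻¹ ^ N * (N ! * ε⁻¹ ^ N)), by positivity, fun x hx => ?_⟩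
  have hx0 : 0 < x := hρ.trans_le hx
  have h1 : x ^ m = ρ ^ m * (x / ρ) ^ m := by
    rw [← Real.mul_rpow hρ.le (by positivity)]; congr 1; field_simp
  have h2 : (x / ρ) ^ m ≤ (x / ρ) ^ N := by
    rw [← Real.rpow_natCast]
    exact Real.rpow_le_rpow_of_exponent_le ((one_le_div hρ).2 hx) hN
  have h3 : x ^ N ≤ (N ! * ε⁻¹ ^ N) * Real.exp (ε * x) := by
    have := Real.pow_div_factorial_le_exp (ε * x) (by positivity) N
    rw [div_le_iff₀ (by positivity)] at this
    calc x ^ N = ε⁻¹ ^ N * (ε * x) ^ N := by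
          rw [← mul_pow]; congr 1; field_simp
      _ ≤ ε⁻¹ ^ N * (Real.exp (ε * x) * N !) := by gcongr
      _ = _ := by ring
  calc x ^ m = ρ ^ m * (x / ρ) ^ m := h1
    _ ≤ ρ ^ m * (x / ρ) ^ N := by gcongr
    _ = ρ ^ m * (ρ⁻¹ ^ N * x ^ N) := by rw [div_eq_inv_mul, mul_pow]
    _ ≤ ρ ^ m * (ρ⁻¹ ^ N * ((N ! * ε⁻¹ ^ N) * Real.exp (ε * x))) := by gcongr
    _ = _ := by ring

theorem geom_bound (N : ℕ) : ∑ j ∈ Finset.range N, Real.exp (-(((j + 1 : ℕ) : ℝ) / 2)) ≤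
    (1 - Real.exp (-(1 / 2)))⁻¹ := by
  have hr : Real.exp (-(1 / 2 : ℝ)) < 1 := by rw [Real.exp_lt_one_iff]; norm_num
  have hs := summable_geometric_of_lt_one (Real.exp_pos _).le hr
  rw [← tsum_geometric_of_lt_one (Real.exp_pos _).le hr]
  refine le_trans (Finset.sum_le_sum fun j _ => ?_)
    (hs.sum_le_tsum (Finset.range N) fun j _ => by positivity)
  rw [← Real.exp_nat_mul]
  apply Real.exp_le_exp.2
  push_cast; linarith

/-- Leibniz estimate in the transition zone. -/
theorem transition_term (m Ma Ca ρ A : ℝ) (hMa : 0 < Ma) (hCa : 0 < Ca) (hρ : 0 < ρ)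
    (hA : 0 < A) (hρCa : Real.exp 1 * Ca < ρ) (j : ℕ) (x : ℝ) (hx0 : 0 < x)
    (hx1 : (j : ℝ) * ρ ≤ x) (hx2 : x ≤ 2 * (j : ℝ) * ρ) (l l1 l2 : List (Fin n))
    (hc : ∀ i, l1.count i + l2.count i = l.count i) (hl : l1.length + l2.length = l.length) :
    A ^ l1.length * (Ma * Ca ^ (l2.length + j) * (∏ i : Fin n, ((l2.count i)! : ℝ)) * (j ! : ℝ) *
          x ^ (m - (j : ℝ) - (l2.length : ℝ))) ≤
      Ma * (A * (4 * ρ * (n + 1)) + Ca) ^ l.length * (∏ i : Fin n, ((l.count i)! : ℝ)) *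
        x ^ (m - (l.length : ℝ)) * Real.exp (-((j : ℝ) / 2)) := by
  set E := A * (4 * ρ * (n + 1)) + Ca with hE
  set P := ∏ i : Fin n, ((l.count i)! : ℝ)
  set P1 := ∏ i : Fin n, ((l1.count i)! : ℝ) with hP1
  set P2 := ∏ i : Fin n, ((l2.count i)! : ℝ)
  have hP1p : 0 < P1 := Finset.prod_pos fun i _ => by positivity
  have hP2p : 0 < P2 := Finset.prod_pos fun i _ => by positivity
  have hPP : P1 * P2 ≤ P := by
    rw [← Finset.prod_mul_distrib]
    apply Finset.prod_le_prod
    · intro i _; positivity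
    · intro i _
      rw [← hc i]
      exact_mod_cast Nat.le_of_dvd (Nat.factorial_pos _)
        (Nat.factorial_mul_factorial_dvd_factorial_add _ _)
  have hsplit : x ^ (m - (j : ℝ) - (l2.length : ℝ)) =
      x ^ (m - (l.length : ℝ)) * x ^ l1.length / x ^ j := by
    rw [← Real.rpow_natCast x l1.length, ← Real.rpow_natCast x j, ← Real.rpow_add hx0,
      ← Real.rpow_sub hx0, ← hl]
    congr 1; push_cast; ring
  have hxs : x ^ l1.length ≤ (4 * ρ * (n + 1)) ^ l1.length * P1 * Real.exp ((j : ℝ) / 2) := by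
    have h := pow_length_le l1 (4 * ρ * (n + 1))⁻¹ x (by positivity) hx0.le
    rw [inv_inv] at h
    refine h.trans ?_
    gcongr
    rw [inv_mul_eq_div, ← mul_div_assoc, div_le_iff₀ (by positivity)]
    have h5 : (n : ℝ) * x ≤ (n + 1) * x := by nlinarith
    have h6 : ((n : ℝ) + 1) * x ≤ (n + 1) * (2 * j * ρ) := by gcongr
    linarith
  have hk := key_exp Ca ρ hCa hρCa j x hx1 hx0
  have hpow : (A * (4 * ρ * (n + 1))) ^ l1.length * Ca ^ l2.length ≤ E ^ l.length := by
    rw [← hl, pow_add]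
    gcongr
    · rw [hE]; linarith
    · rw [hE]; have : 0 < A * (4 * ρ * (n + 1)) := by positivity
      linarith
  have hexp : Real.exp (-(j : ℝ)) * Real.exp ((j : ℝ) / 2) = Real.exp (-((j : ℝ) / 2)) := by
    rw [← Real.exp_add]; congr 1; ring
  have hX : 0 < x ^ (m - (l.length : ℝ)) := Real.rpow_pos_of_pos hx0 _
  calc _ = Ma * (A ^ l1.length * Ca ^ l2.length) * P2 * x ^ (m - (l.length : ℝ)) *
        x ^ l1.length * (Ca ^ j * (j ! : ℝ) / x ^ j) := by
        rw [hsplit, pow_add]; ring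
    _ ≤ Ma * (A ^ l1.length * Ca ^ l2.length) * P2 * x ^ (m - (l.length : ℝ)) *
        ((4 * ρ * (n + 1)) ^ l1.length * P1 * Real.exp ((j : ℝ) / 2)) * Real.exp (-(j : ℝ)) := by
        gcongr
    _ = Ma * ((A * (4 * ρ * (n + 1))) ^ l1.length * Ca ^ l2.length) * (P1 * P2) *
        x ^ (m - (l.length : ℝ)) * (Real.exp (-(j : ℝ)) * Real.exp ((j : ℝ) / 2)) := by
        rw [mul_pow A]; ring
    _ ≤ _ := by rw [hexp]; gcongr

/-- Construction of a finite realization of a formal pseudoanalytic amplitude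
`∑_{j≥0} a_j` of order `m` (spatial variables abstracted into `α`): with Ehrenpreis
cut-offs `ψ_j` vanishing for `|η| ≤ jρ` and equal to `1` for `|η| ≥ 2jρ`
(`ρ > 2Rₐ`, `ρ > e·Cₐ`), the function `a := a₀ + ∑_{j≥1} ψ_j a_j` is a pseudoanalytic
amplitude of order `m`, equals `a₀` for `|η| < ρ`, and is a finite realization of
`∑ a_j`: for every `R > ρ` there is `C > 0` with
`|a − ∑_{j ≤ |η|/R} a_j| ≤ C e^{−C⁻¹|η|}`. -/
theorem finite_realization_exists
    {α : Type*} (m : ℝ) (aj : ℕ → α → (Fin n → ℝ) → ℂ)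
    (Ma Ca Ra : ℝ) (hMa : 0 < Ma) (hCa : 0 < Ca) (hRa : 0 < Ra)
    (hsmooth : ∀ (j : ℕ) (w : α),
      ContDiffOn ℝ (⊤ : ℕ∞) (aj j w) {η : Fin n → ℝ | η ≠ 0})
    (hformal : ∀ (j : ℕ) (l : List (Fin n)) (w : α) (η : Fin n → ℝ), η ≠ 0 →
      Ra * max 1 ((l.length + j : ℕ) : ℝ) ≤ ‖η‖ →
      ‖pderivEtas l (aj j w) η‖ ≤
        Ma * Ca ^ (l.length + j) * (∏ i : Fin n, ((l.count i)! : ℝ)) * (j ! : ℝ) *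
          ‖η‖ ^ (m - (j : ℝ) - (l.length : ℝ)))
    (ρ : ℝ) (hρRa : 2 * Ra < ρ) (hρCa : Real.exp 1 * Ca < ρ)
    (ψ : ℕ → (Fin n → ℝ) → ℝ)
    (hψsmooth : ∀ j, ContDiff ℝ (⊤ : ℕ∞) (ψ j))
    (hψzero : ∀ j : ℕ, 1 ≤ j → ∀ η : Fin n → ℝ, ‖η‖ ≤ (j : ℝ) * ρ → ψ j η = 0)
    (hψone : ∀ j : ℕ, 1 ≤ j → ∀ η : Fin n → ℝ, 2 * (j : ℝ) * ρ ≤ ‖η‖ → ψ j η = 1)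
    (hψrange : ∀ (j : ℕ) (η : Fin n → ℝ), 0 ≤ ψ j η ∧ ψ j η ≤ 1)
    (Cψ : ℝ) (hCψ : 0 < Cψ)
    (hψder : ∀ j : ℕ, 1 ≤ j → ∀ (l : List (Fin n)) (η : Fin n → ℝ), l.length ≤ j →
      ‖pderivEtas l (ψ j) η‖ ≤ (Cψ / ρ) ^ l.length)
    (a : α → (Fin n → ℝ) → ℂ)
    (ha : ∀ (w : α) (η : Fin n → ℝ),
      a w η = aj 0 w η + ∑' j : ℕ, ((ψ (j + 1) η : ℝ) : ℂ) * aj (j + 1) w η) :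
    (∀ (w : α) (η : Fin n → ℝ), ‖η‖ < ρ → a w η = aj 0 w η) ∧
    (∃ M' C' R' : ℝ, 0 < M' ∧ 0 < C' ∧ 0 < R' ∧
      ∀ (l : List (Fin n)) (w : α) (η : Fin n → ℝ), η ≠ 0 →
        R' * max 1 (l.length : ℝ) ≤ ‖η‖ →
        ‖pderivEtas l (a w) η‖ ≤
          M' * C' ^ l.length * (∏ i : Fin n, ((l.count i)! : ℝ)) *
            ‖η‖ ^ (m - (l.length : ℝ))) ∧
    (∀ R : ℝ, ρ < R → ∃ C : ℝ, 0 < C ∧ ∀ (w : α) (η : Fin n → ℝ),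
      ‖a w η - ∑ j ∈ Finset.range (Nat.floor (‖η‖ / R) + 1), aj j w η‖
        ≤ C * Real.exp (-C⁻¹ * ‖η‖)) := by
  have hρ : 0 < ρ := by linarith
  -- finite sum formula
  have hfin : ∀ (N : ℕ) (w : α) (η : Fin n → ℝ), ‖η‖ ≤ ((N : ℝ) + 1) * ρ →
      a w η = aj 0 w η + ∑ j ∈ Finset.range N, (ψ (j + 1) η) • aj (j + 1) w η := by
    intro N w η hN
    rw [ha w η, tsum_eq_sum (s := Finset.range N)]
    · simp only [Complex.real_smul]
    · intro j hj
      rw [Finset.mem_range, not_lt] at hj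
      rw [hψzero (j + 1) (by omega) η]
      · simp
      · refine hN.trans ?_
        push_cast
        gcongr
  have hsm : ∀ j w, SmoothOff (aj j w) := fun j w η hη =>
    (hsmooth j w).contDiffAt (isOpen_ne.mem_nhds hη)
  have hψs : ∀ j, SmoothOff (ψ j) := fun j η _ => (hψsmooth j).contDiffAt
  have hprod : ∀ j w, SmoothOff (fun x => ψ j x • aj j w x) := fun j w η hη =>
    (hψs j η hη).smul (hsm j w η hη)
  set G := (1 - Real.exp (-(1 / 2 : ℝ)))⁻¹ with hG
  have hGp : 0 < G := by
    have : Real.exp (-(1 / 2 : ℝ)) < 1 := by rw [Real.exp_lt_one_iff]; norm_num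
    rw [hG]; apply inv_pos.2; linarith
  refine ⟨?_, ?_, ?_⟩
  · intro w η hη
    have := hfin 0 w η (by simpa using hη.le)
    simpa using this
  · set A := Cψ / ρ with hA
    have hAp : 0 < A := by positivity
    set E := A * (4 * ρ * (n + 1)) + Ca with hE
    have hCE : Ca ≤ E := by
      have : 0 < A * (4 * ρ * (n + 1)) := by positivity
      linarith
    have hEp : 0 < E := by linarith
    have hC2E : Ca ≤ 2 * E := by linarith
    refine ⟨Ma * (1 + G), 2 * E, 2 * ρ, by positivity, by positivity, by positivity, ?_⟩
    intro l w η hη hR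
    have hx0 : 0 < ‖η‖ := norm_pos_iff.2 hη
    have hR1 : 2 * ρ ≤ ‖η‖ := by
      have := le_max_left 1 (l.length : ℝ)
      nlinarith
    have hRk : 2 * ρ * l.length ≤ ‖η‖ := by
      have := le_max_right 1 (l.length : ℝ)
      nlinarith
    set P := ∏ i : Fin n, ((l.count i)! : ℝ) with hP
    have hPp : 0 < P := Finset.prod_pos fun i _ => by positivity
    have hX : 0 < ‖η‖ ^ (m - (l.length : ℝ)) := Real.rpow_pos_of_pos hx0 _
    -- bound for a single term
    have hterm : ∀ j : ℕ, 1 ≤ j → ‖pderivEtas l (fun x => ψ j x • aj j w x) η‖ ≤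
        Ma * (2 * E) ^ l.length * P * ‖η‖ ^ (m - (l.length : ℝ)) *
          Real.exp (-((j : ℝ) / 2)) := by
      intro j hj
      have hj1 : (1 : ℝ) ≤ j := by exact_mod_cast hj
      rcases lt_or_ge ‖η‖ (j * ρ) with h1 | h1
      · have he : (fun x => ψ j x • aj j w x) =ᶠ[nhds η] fun _ => 0 := by
          filter_upwards [continuous_norm.continuousAt.eventually (gt_mem_nhds h1)] with x hx
          rw [hψzero j hj x (le_of_lt hx), zero_smul]
        rw [(pderivEtas_congr l he).eq_of_nhds, pderivEtas_zero]
        simp only [norm_zero]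
        positivity
      rcases lt_or_ge (2 * j * ρ) ‖η‖ with h2 | h2
      · have he : (fun x => ψ j x • aj j w x) =ᶠ[nhds η] aj j w := by
          filter_upwards [continuous_norm.continuousAt.eventually (lt_mem_nhds h2)] with x hx
          rw [hψone j hj x (le_of_lt hx), one_smul]
        rw [(pderivEtas_congr l he).eq_of_nhds]
        have hb := hformal j l w η hη (by
          rw [max_eq_right (by push_cast; nlinarith [(Nat.cast_nonneg l.length : (0 : ℝ) ≤ _)])]
          push_cast
          have e1 : Ra * l.length ≤ ρ / 2 * l.length := by gcongr; linarith
          have e2 : Ra * j ≤ ρ / 2 * j := by gcongr; linarith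
          nlinarith)
        refine hb.trans ?_
        have hk := key_exp Ca ρ hCa hρCa j ‖η‖ h1 hx0
        have hsplit : ‖η‖ ^ (m - (j : ℝ) - (l.length : ℝ)) =
            ‖η‖ ^ (m - (l.length : ℝ)) / ‖η‖ ^ j := by
          rw [← Real.rpow_natCast ‖η‖ j, ← Real.rpow_sub hx0]
          congr 1; ring
        calc _ = Ma * Ca ^ l.length * P * ‖η‖ ^ (m - (l.length : ℝ)) *
              (Ca ^ j * (j ! : ℝ) / ‖η‖ ^ j) := by rw [hsplit, pow_add]; ring
          _ ≤ Ma * (2 * E) ^ l.length * P * ‖η‖ ^ (m - (l.length : ℝ)) *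
              Real.exp (-(j : ℝ)) := by gcongr
          _ ≤ _ := by gcongr; linarith
      · have hkj : l.length ≤ j := by
          have : (2 * ρ) * (l.length : ℝ) ≤ (2 * ρ) * j := by linarith
          exact_mod_cast le_of_mul_le_mul_left this (by positivity)
        have hkj' : (l.length : ℝ) ≤ j := by exact_mod_cast hkj
        rw [pderivEtas_smul l (hψs j) (hsm j w) η hη]
        refine (list_norm_sum_le _ _ (Ma * E ^ l.length * P *
          ‖η‖ ^ (m - (l.length : ℝ)) * Real.exp (-((j : ℝ) / 2))) ?_).trans ?_
        · intro p hp
          obtain ⟨hc, hl⟩ := splits_count l p hp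
          have hl2 : (p.2.length : ℝ) ≤ j := by exact_mod_cast (by omega : p.2.length ≤ j)
          have hb := hformal j p.2 w η hη (by
            rw [max_eq_right (by push_cast; nlinarith [(Nat.cast_nonneg p.2.length : (0 : ℝ) ≤ _)])]
            push_cast
            nlinarith)
          have hd := hψder j hj p.1 η (by omega)
          rw [norm_smul]
          refine le_trans (mul_le_mul hd hb (norm_nonneg _) (by positivity)) ?_
          exact transition_term m Ma Ca ρ A hMa hCa hρ hAp hρCa j ‖η‖ hx0 h1 h2 l p.1 p.2 hc hl
        · rw [splits_length, mul_pow]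
          push_cast
          apply le_of_eq; ring
    -- local finite sum
    obtain ⟨N, hN⟩ := exists_nat_gt (‖η‖ / ρ)
    have hN' : ‖η‖ < ((N : ℝ) + 1) * ρ := by
      rw [div_lt_iff₀ hρ] at hN
      linarith
    have he : a w =ᶠ[nhds η] fun x => aj 0 w x +
        (fun y => ∑ j ∈ Finset.range N, (fun z => ψ (j + 1) z • aj (j + 1) w z) y) x := by
      filter_upwards [continuous_norm.continuousAt.eventually (gt_mem_nhds hN')] with x hx
      exact hfin N w x (le_of_lt hx)
    rw [(pderivEtas_congr l he).eq_of_nhds,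
      pderivEtas_add l (hsm 0 w) (SmoothOff.sum _ fun j => hprod (j + 1) w) η hη,
      pderivEtas_sum l N (fun j => hprod (j + 1) w) η hη]
    have h0 := hformal 0 l w η hη (by
      simp only [add_zero]
      refine le_trans ?_ hR
      gcongr; linarith)
    have h0' : ‖pderivEtas l (aj 0 w) η‖ ≤
        Ma * (2 * E) ^ l.length * P * ‖η‖ ^ (m - (l.length : ℝ)) := by
      refine h0.trans ?_
      simp only [add_zero, Nat.factorial_zero, Nat.cast_one, mul_one, Nat.cast_zero, sub_zero]
      gcongr
    have hS : ‖∑ j ∈ Finset.range N, pderivEtas l (fun x => ψ (j + 1) x • aj (j + 1) w x) η‖ ≤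
        Ma * (2 * E) ^ l.length * P * ‖η‖ ^ (m - (l.length : ℝ)) * G := by
      refine (norm_sum_le _ _).trans ((Finset.sum_le_sum fun j _ =>
        hterm (j + 1) (by omega)).trans ?_)
      rw [← Finset.mul_sum]
      gcongr
      exact geom_bound N
    refine (norm_add_le _ _).trans ((add_le_add h0' hS).trans (le_of_eq ?_))
    ring
  · intro R hR
    have hRp : 0 < R := by linarith
    set c := (4 * (2 * ρ + R))⁻¹ with hc
    have hcp : 0 < c := by positivity
    obtain ⟨K, hK, hKb⟩ := rpow_le_exp m ρ c hρ hcp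
    set K' := Ma * K * G with hK'
    have hK'p : 0 < K' := by positivity
    have hmain : ∀ (w : α) (η : Fin n → ℝ),
        ‖a w η - ∑ j ∈ Finset.range (Nat.floor (‖η‖ / R) + 1), aj j w η‖
          ≤ K' * Real.exp (-c * ‖η‖) := by
      intro w η
      set Fl := Nat.floor (‖η‖ / R) with hFl
      set N := Nat.floor (‖η‖ / ρ) with hN
      have hFN : Fl ≤ N := by
        apply Nat.floor_le_floor
        gcongr
      have hNx : ‖η‖ ≤ ((N : ℝ) + 1) * ρ := by
        have := Nat.lt_floor_add_one (‖η‖ / ρ)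
        rw [div_lt_iff₀ hρ] at this
        exact this.le
      have hsub : ∑ j ∈ Finset.range Fl, aj (j + 1) w η =
          ∑ j ∈ Finset.range N, if j < Fl then aj (j + 1) w η else 0 := by
        rw [← Finset.sum_filter]
        apply Finset.sum_congr _ fun _ _ => rfl
        ext j; simp; omega
      rw [hfin N w η hNx, Finset.sum_range_succ', hsub, add_comm (aj 0 w η), add_sub_add_right_eq_sub,
        ← Finset.sum_sub_distrib]
      have hterm : ∀ j ∈ Finset.range N,
          ‖ψ (j + 1) η • aj (j + 1) w η - (if j < Fl then aj (j + 1) w η else 0)‖ ≤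
          (Ma * K * Real.exp (-c * ‖η‖)) * Real.exp (-(((j + 1 : ℕ) : ℝ) / 2)) := by
        intro j hj
        rw [Finset.mem_range] at hj
        have hjx : ((j + 1 : ℕ) : ℝ) * ρ ≤ ‖η‖ := by
          have h1 : ((j + 1 : ℕ) : ℝ) ≤ N := by exact_mod_cast hj
          have h2 : (N : ℝ) ≤ ‖η‖ / ρ := Nat.floor_le (by positivity)
          rw [← le_div_iff₀ hρ]; linarith
        have hj1 : (1 : ℝ) ≤ ((j + 1 : ℕ) : ℝ) := by push_cast; linarith [(Nat.cast_nonneg j : (0 : ℝ) ≤ _)]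
        have hρx : ρ ≤ ‖η‖ := by nlinarith
        have hx0 : 0 < ‖η‖ := by linarith
        -- the size of the difference
        have hle : ‖ψ (j + 1) η • aj (j + 1) w η - (if j < Fl then aj (j + 1) w η else 0)‖ ≤
            ‖aj (j + 1) w η‖ := by
          obtain ⟨p0, p1⟩ := hψrange (j + 1) η
          split_ifs
          · have : ψ (j + 1) η • aj (j + 1) w η - aj (j + 1) w η =
              (ψ (j + 1) η - 1) • aj (j + 1) w η := by rw [sub_smul, one_smul]
            rw [this, norm_smul]
            apply mul_le_of_le_one_left (norm_nonneg _)
            rw [Real.norm_eq_abs, abs_le]; constructor <;> linarith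
          · rw [sub_zero, norm_smul]
            apply mul_le_of_le_one_left (norm_nonneg _)
            rw [Real.norm_eq_abs, abs_le]; constructor <;> linarith
        by_cases hbig : 2 * ((j + 1 : ℕ) : ℝ) * ρ ≤ ‖η‖ ∧ j < Fl
        · rw [hψone (j + 1) (by omega) η hbig.1, if_pos hbig.2, one_smul, sub_self, norm_zero]
          positivity
        have hlow : ‖η‖ ≤ ((j + 1 : ℕ) : ℝ) * (2 * ρ + R) := by
          rcases not_and_or.1 hbig with h | h
          · rw [not_le] at h
            nlinarith
          · have h1 : Fl < j + 1 := by omega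
            rw [hFl, Nat.floor_lt (by positivity), div_lt_iff₀ hRp] at h1
            nlinarith
        refine hle.trans ?_
        have hb := hformal (j + 1) [] w η (norm_pos_iff.1 hx0) (by
          simp only [List.length_nil, zero_add]
          rw [max_eq_right hj1]
          nlinarith)
        simp only [pderivEtas, List.length_nil, zero_add, List.count_nil, Nat.factorial_zero,
          Nat.cast_one, Finset.prod_const_one, mul_one, Nat.cast_zero, sub_zero] at hb
        refine hb.trans ?_
        have hk := key_exp Ca ρ hCa hρCa (j + 1) ‖η‖ hjx hx0
        have hm := hKb ‖η‖ hρx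
        have hcx : 2 * (c * ‖η‖) ≤ ((j + 1 : ℕ) : ℝ) / 2 := by
          rw [hc, inv_mul_eq_div, ← mul_div_assoc, div_le_iff₀ (by positivity)]
          linarith
        rw [Real.rpow_sub hx0, Real.rpow_natCast]
        calc _ = Ma * ‖η‖ ^ m * (Ca ^ (j + 1) * ((j + 1)! : ℝ) / ‖η‖ ^ (j + 1)) := by ring
          _ ≤ Ma * (K * Real.exp (c * ‖η‖)) * Real.exp (-((j + 1 : ℕ) : ℝ)) := by gcongr
          _ = Ma * K * Real.exp (c * ‖η‖ - ((j + 1 : ℕ) : ℝ)) := by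
            rw [sub_eq_add_neg, Real.exp_add]; ring
          _ ≤ Ma * K * Real.exp (-c * ‖η‖ + -(((j + 1 : ℕ) : ℝ) / 2)) := by
            gcongr
            linarith
          _ = _ := by rw [Real.exp_add]; ring
      refine (norm_sum_le _ _).trans ((Finset.sum_le_sum hterm).trans ?_)
      rw [← Finset.mul_sum]
      have := geom_bound N
      calc _ ≤ (Ma * K * Real.exp (-c * ‖η‖)) * G := by gcongr
        _ = _ := by rw [hK']; ring
    refine ⟨K' + c⁻¹, by positivity, fun w η => (hmain w η).trans ?_⟩
    have h1 : (K' + c⁻¹)⁻¹ ≤ c := by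
      rw [inv_le_comm₀ (by positivity) hcp]; linarith
    have h2 : 0 < c⁻¹ := by positivity
    apply mul_le_mul (by linarith) _ (Real.exp_pos _).le (by positivity)
    apply Real.exp_le_exp.2
    have := mul_le_mul_of_nonneg_right h1 (norm_nonneg η)
    linarith
end

section
/- Let ψ : X × V → ℂ be holomorphic with ψ(π(χ(v)), v) real (equal to −v₁·v₂) for v in a real submanifold, and suppose Im ψ(x,v) ≥ C₁^{-1}(|Im z(x,v)|² + |Im η(x,v)|²) fails — instead prove directly: if Φ has positive semi-definite imaginary Hessian at the critical point and ψ(x,v) = Φ(z(x,v), η(x,v); x, v) is its critical value, and sup_{|s|≤1} −Im((s+iω)·∂²Φ(s+iω)) ≥ C > 0 uniformly for unit ω ∈ ℝ^{N+n} (by Hörmander Lemma 7.7.9, using ∂²Φ symmetric non-degenerate with positive semi-definite imaginary part), then for (x,v) near (x̂,v̂): Im ψ(x,v) ≥ c·|Im(z,η)(x,v)|² for some c > 0. -/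
variable {d k : ℕ}

/-- Componentwise inclusion of a real vector into `ℂ^d`. -/
def realVec (w : Fin d → ℝ) : Fin d → ℂ := fun i => (w i : ℂ)

open Filter Topology Metric Set in
lemma schwarz_two {D : ℂ → ℂ} {r ε : ℝ} (hr : 0 < r)
    (hd : DifferentiableOn ℂ D (ball 0 r)) (h0 : HasDerivAt D 0 0)
    (hb : ∀ τ ∈ ball (0 : ℂ) r, ‖D τ‖ ≤ ε) {t : ℂ} (ht : t ∈ ball (0 : ℂ) r) :
    ‖D t - D 0‖ ≤ 2 * ε * (‖t‖ / r) ^ 2 := by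
  have h := Complex.dist_le_mul_div_pow_of_mapsTo_ball_of_isLittleO (n := 1) (R₂ := 2 * ε) hd
    (fun τ hτ => by
      rw [mem_closedBall, dist_eq_norm]
      have h1 := hb τ hτ
      have h2 := hb 0 (mem_ball_self hr)
      linarith [norm_sub_le (D τ) (D 0)])
    (by
      have := h0.isLittleO
      simpa using this.norm_right) ht
  simpa [dist_eq_norm] using h

open Filter Topology Metric Set in
lemma peano_two {E : Type*} [NormedAddCommGroup E] [NormedSpace ℂ E] {f : E → ℂ} {x : E}
    (hf : ∀ᶠ y in 𝓝 x, DifferentiableAt ℂ f y) (hx : fderiv ℂ f x = 0)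
    (h2 : DifferentiableAt ℂ (fderiv ℂ f) x) {ε : ℝ} (hε : 0 < ε) :
    ∃ δ > 0, ∀ y : E, ‖y‖ < δ →
      ‖f (x + y) - f x - (1 / 2 : ℂ) * fderiv ℂ (fderiv ℂ f) x y y‖ ≤ ε * ‖y‖ ^ 2 := by
  have h3 := h2.hasFDerivAt.isLittleO.def hε
  obtain ⟨δ, hδ, hball⟩ := Metric.eventually_nhds_iff.1 (hf.and h3)
  refine ⟨δ, hδ, fun y hy => ?_⟩
  set Q := fderiv ℂ (fderiv ℂ f) x with hQ
  have key : ∀ τ : ℝ, τ ∈ Icc (0 : ℝ) 1 →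
      dist (x + (τ : ℂ) • y) x < δ ∧ ‖(τ : ℂ) • y‖ ≤ ‖y‖ := by
    intro τ hτ
    have h : ‖(τ : ℂ) • y‖ ≤ ‖y‖ := by
      rw [norm_smul, Complex.norm_real, Real.norm_eq_abs, abs_of_nonneg hτ.1]
      exact mul_le_of_le_one_left (norm_nonneg _) hτ.2
    refine ⟨?_, h⟩
    rw [dist_eq_norm, add_sub_cancel_left]
    exact lt_of_le_of_lt h hy
  have hmv := norm_image_sub_le_of_norm_deriv_le_segment_01' (C := ε * ‖y‖ ^ 2)
    (f := fun τ : ℝ => f (x + (τ : ℂ) • y) - (1 / 2 : ℂ) * (τ : ℂ) ^ 2 * Q y y)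
    (f' := fun τ : ℝ => fderiv ℂ f (x + (τ : ℂ) • y) y - (τ : ℂ) * Q y y) ?_ ?_
  · have e : f (x + y) - f x - (1 / 2 : ℂ) * Q y y =
      (f (x + ((1 : ℝ) : ℂ) • y) - (1 / 2 : ℂ) * ((1 : ℝ) : ℂ) ^ 2 * Q y y)
        - (f (x + ((0 : ℝ) : ℂ) • y) - (1 / 2 : ℂ) * ((0 : ℝ) : ℂ) ^ 2 * Q y y) := by
      simp; ring
    rw [e]; exact hmv
  · intro τ hτ
    obtain ⟨hd, -⟩ := hball (key τ hτ).1
    have hl : HasDerivAt (fun z : ℂ => x + z • y) y (τ : ℂ) := by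
      simpa using ((hasDerivAt_id (τ : ℂ)).smul_const y).const_add x
    have h1 : HasDerivAt (fun z : ℂ => f (x + z • y)) (fderiv ℂ f (x + (τ : ℂ) • y) y) (τ : ℂ) :=
      hd.hasFDerivAt.comp_hasDerivAt (τ : ℂ) hl
    have h2 : HasDerivAt (fun z : ℂ => (1 / 2 : ℂ) * z ^ 2 * Q y y) ((τ : ℂ) * Q y y) (τ : ℂ) := by
      have := (((hasDerivAt_id (τ : ℂ)).pow 2).const_mul (1 / 2 : ℂ)).mul_const (Q y y)
      refine this.congr_deriv ?_
      simp
    exact (h1.sub h2).comp_ofReal.hasDerivWithinAt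
  · intro τ hτ
    have hk := key τ ⟨hτ.1, hτ.2.le⟩
    obtain ⟨-, hd⟩ := hball hk.1
    rw [hx, add_sub_cancel_left, sub_zero] at hd
    have e : fderiv ℂ f (x + (τ : ℂ) • y) y - (τ : ℂ) * Q y y =
      (fderiv ℂ f (x + (τ : ℂ) • y) - Q ((τ : ℂ) • y)) y := by simp
    rw [e]
    calc _ ≤ ‖fderiv ℂ f (x + (τ : ℂ) • y) - Q ((τ : ℂ) • y)‖ * ‖y‖ :=
          ContinuousLinearMap.le_opNorm _ _
      _ ≤ (ε * ‖(τ : ℂ) • y‖) * ‖y‖ := by gcongr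
      _ ≤ (ε * ‖y‖) * ‖y‖ := by gcongr; exact hk.2
      _ = _ := by ring

lemma coord_le_one {d : ℕ} {s : Fin d → ℝ} (h : (∑ i, s i ^ 2) ≤ 1) : ‖realVec s‖ ≤ 1 := by
  rw [pi_norm_le_iff_of_nonneg zero_le_one]
  intro i
  have := Finset.single_le_sum (f := fun i => s i ^ 2) (fun i _ => sq_nonneg _) (Finset.mem_univ i)
  simp only [realVec, Complex.norm_real, Real.norm_eq_abs]
  rw [abs_le_one_iff_mul_self_le_one]
  nlinarith

lemma continuous_realVec {d : ℕ} : Continuous (realVec : (Fin d → ℝ) → (Fin d → ℂ)) := by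
  unfold realVec
  fun_prop

set_option maxHeartbeats 2000000 in
/-- Lower bound for the imaginary part of the critical value `ψ(x,v) = Φ(z(x,v),
η(x,v); x, v)` of a holomorphic phase `Φ` with `Im Φ ≥ 0` on the real domain:
if the Hessian `∂²Φ` at the critical point satisfies the uniform sup-inequality
`sup_{|s|≤1} −Im((s+iω)·∂²Φ(s+iω)) ≥ C > 0` for all unit `ω` (Hörmander, Lemma 7.7.9),
then for real parameters `p = (x,v)` near `p̂`,
`Im ψ(p) ≥ c·|Im(z,η)(p)|²` for some `c > 0`. Here `w = (z,η)` is abbreviated to a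
single complex variable and `W p` denotes the holomorphic critical point. -/
theorem im_critical_value_lower_bound
    (Φ : (Fin d → ℂ) → (Fin k → ℂ) → ℂ)
    (w₀ : Fin d → ℝ) (p₀ : Fin k → ℝ)
    (U : Set ((Fin d → ℂ) × (Fin k → ℂ))) (hUopen : IsOpen U)
    (hUmem : (realVec w₀, realVec p₀) ∈ U)
    (hhol : DifferentiableOn ℂ (fun q : (Fin d → ℂ) × (Fin k → ℂ) => Φ q.1 q.2) U)
    (hIm : ∀ (w : Fin d → ℝ) (p : Fin k → ℝ), (realVec w, realVec p) ∈ U →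
      0 ≤ (Φ (realVec w) (realVec p)).im)
    (W : (Fin k → ℂ) → (Fin d → ℂ))
    (hW : ∃ V : Set (Fin k → ℂ), IsOpen V ∧ realVec p₀ ∈ V ∧
      DifferentiableOn ℂ W V ∧
      ∀ p ∈ V, fderiv ℂ (fun w => Φ w p) (W p) = 0)
    (hW₀ : W (realVec p₀) = realVec w₀)
    (hsup : ∃ C : ℝ, 0 < C ∧ ∀ ω : Fin d → ℝ, (∑ i, ω i ^ 2) = 1 →
      ∃ s : Fin d → ℝ, (∑ i, s i ^ 2) ≤ 1 ∧
        C ≤ -((iteratedFDeriv ℂ 2 (fun w => Φ w (realVec p₀)) (realVec w₀))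
            ![realVec s + Complex.I • realVec ω,
              realVec s + Complex.I • realVec ω]).im) :
    ∃ c : ℝ, 0 < c ∧ ∃ ε : ℝ, 0 < ε ∧ ∀ p : Fin k → ℝ, dist p p₀ < ε →
      c * (∑ i, ((W (realVec p) i).im) ^ 2) ≤ (Φ (W (realVec p)) (realVec p)).im := by
  obtain ⟨V, hVo, hpV, hWd, hcrit⟩ := hW
  obtain ⟨C, hC, hsup⟩ := hsup
  set F : (Fin d → ℂ) × (Fin k → ℂ) → ℂ := fun q => Φ q.1 q.2 with hF
  set q₀ : (Fin d → ℂ) × (Fin k → ℂ) := (realVec w₀, realVec p₀) with hq₀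
  -- real parameters near `p₀`
  have hcW : ContinuousAt (fun p : Fin k → ℝ => W (realVec p)) p₀ :=
    ContinuousAt.comp (g := W) ((hWd.continuousOn).continuousAt (hVo.mem_nhds hpV))
      continuous_realVec.continuousAt
  have hcq : ContinuousAt (fun p : Fin k → ℝ => (W (realVec p), realVec p)) p₀ :=
    hcW.prodMk continuous_realVec.continuousAt
  have hq0 : (W (realVec p₀), realVec p₀) = q₀ := by rw [hW₀]
  have hTc : ContinuousAt (fun p : Fin k → ℝ => ∑ i, ((W (realVec p) i).im) ^ 2) p₀ := by
    refine tendsto_finsetSum _ fun i _ => ?_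
    exact ((Complex.continuous_im.continuousAt.comp
      ((continuous_apply i).continuousAt.comp hcW)).pow 2)
  have hT0 : (∑ i, ((W (realVec p₀) i).im) ^ 2) = 0 := by
    rw [hW₀]; simp [realVec]
  obtain ⟨R, hR, hRU⟩ := Metric.isOpen_iff.1 hUopen q₀ hUmem
  -- slices are differentiable
  have hslice : ∀ w p, (w, p) ∈ U → DifferentiableAt ℂ (fun w => Φ w p) w := by
    intro w p h
    have h1 : DifferentiableAt ℂ F (w, p) := (hhol _ h).differentiableAt (hUopen.mem_nhds h)
    have h2 : DifferentiableAt ℂ (fun w : Fin d → ℂ => (w, p)) w := by fun_prop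
    exact DifferentiableAt.comp (g := F) w h1 h2
  -- reality point case `t = 0`
  have hreal : ∀ p : Fin k → ℝ, (W (realVec p), realVec p) ∈ U →
      (∑ i, ((W (realVec p) i).im) ^ 2) = 0 → 0 ≤ (Φ (W (realVec p)) (realVec p)).im := by
    intro p hp h0
    have h1 : W (realVec p) = realVec (fun i => (W (realVec p) i).re) := by
      funext i
      have := (Finset.sum_eq_zero_iff_of_nonneg (fun i _ => sq_nonneg _)).1 h0 i (Finset.mem_univ i)
      apply Complex.ext <;> simp [realVec]
      exact pow_eq_zero_iff (two_ne_zero) |>.1 this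
    rw [h1] at hp ⊢
    exact hIm _ _ hp
  set f : (Fin d → ℂ) → ℂ := fun w => Φ w (realVec p₀) with hf
  by_cases hne : ∃ ω : Fin d → ℝ, (∑ i, ω i ^ 2) = 1
  swap
  · -- then every real vector vanishes
    have hz : ∀ b : Fin d → ℝ, ∑ i, b i ^ 2 = 0 := by
      intro b
      by_contra hb
      have hpos : 0 < ∑ i, b i ^ 2 :=
        lt_of_le_of_ne (Finset.sum_nonneg fun i _ => sq_nonneg _) (Ne.symm hb)
      apply hne
      refine ⟨fun i => b i / Real.sqrt (∑ i, b i ^ 2), ?_⟩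
      simp_rw [div_pow, Real.sq_sqrt hpos.le]
      rw [← Finset.sum_div, div_self hb]
    have hev : ∀ᶠ p in nhds p₀, (W (realVec p), realVec p) ∈ U :=
      hcq.eventually_mem (by rw [hq0]; exact hUopen.mem_nhds hUmem)
    obtain ⟨ε, hε, h⟩ := Metric.eventually_nhds_iff.1 hev
    refine ⟨1, one_pos, ε, hε, fun p hp => ?_⟩
    have h0 := hz fun i => (W (realVec p) i).im
    rw [h0, mul_zero]
    exact hreal p (h hp) h0
  have h2 : DifferentiableAt ℂ (fderiv ℂ f) (realVec w₀) := by
    by_contra hnd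
    obtain ⟨ω, hω⟩ := hne
    obtain ⟨s, -, hs⟩ := hsup ω hω
    rw [iteratedFDeriv_two_apply, fderiv_zero_of_not_differentiableAt hnd] at hs
    simp at hs
    linarith
  have hfx : fderiv ℂ f (realVec w₀) = 0 := by
    rw [← hW₀]; exact hcrit _ hpV
  have hfd : ∀ᶠ y in nhds (realVec w₀), DifferentiableAt ℂ f y := by
    have : ContinuousAt (fun y : Fin d → ℂ => (y, realVec p₀)) (realVec w₀) := by fun_prop
    filter_upwards [this.eventually_mem (hUopen.mem_nhds hUmem)] with y hy
    exact hslice _ _ hy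
  obtain ⟨δ₁, hδ₁, hpe⟩ := peano_two hfd hfx h2 (ε := C / 32) (by positivity)
  -- uniform continuity
  set r : ℝ := R / 8 with hr
  have hrpos : 0 < r := by positivity
  have hKU : Metric.closedBall q₀ (R / 2) ⊆ U :=
    (Metric.closedBall_subset_ball (by linarith)).trans hRU
  have huc : UniformContinuousOn F (Metric.closedBall q₀ (R / 2)) :=
    (isCompact_closedBall _ _).uniformContinuousOn_of_continuous
      (hhol.continuousOn.mono hKU)
  obtain ⟨δ₂, hδ₂, hucδ⟩ := Metric.uniformContinuousOn_iff.1 huc (C * r ^ 2 / 32) (by positivity)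
  set m : ℝ := min r (δ₁ / 2) with hm
  have hmpos : 0 < m := by positivity
  have hev : ∀ᶠ p in nhds p₀, dist (W (realVec p), realVec p) q₀ < min (R / 4) δ₂ ∧
      (∑ i, ((W (realVec p) i).im) ^ 2) < m ^ 2 ∧ realVec p ∈ V := by
    refine Filter.Eventually.and ?_ (Filter.Eventually.and ?_ ?_)
    · have := hcq.eventually_mem (s := Metric.ball q₀ (min (R / 4) δ₂))
        (by rw [hq0]; exact Metric.ball_mem_nhds _ (by positivity))
      exact this
    · exact hTc.eventually_lt_const (by beta_reduce; rw [hT0]; positivity)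
    · exact continuous_realVec.continuousAt.eventually_mem (hVo.mem_nhds hpV)
  obtain ⟨ε, hε, hev⟩ := Metric.eventually_nhds_iff.1 hev
  refine ⟨C / 4, by positivity, ε, hε, fun p hp => ?_⟩
  obtain ⟨hd1, hTm, hpV'⟩ := hev hp
  have hdR := lt_of_lt_of_le hd1 (min_le_left _ _)
  have hdδ := lt_of_lt_of_le hd1 (min_le_right _ _)
  set w := W (realVec p) with hw
  set T := ∑ i, ((w i).im) ^ 2 with hT
  have hTnn : 0 ≤ T := Finset.sum_nonneg fun i _ => sq_nonneg _
  have hwU : (w, realVec p) ∈ U := hRU (by rw [Metric.mem_ball]; linarith)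
  rcases hTnn.eq_or_lt with h0 | hTpos
  · rw [← h0, mul_zero]
    exact hreal p hwU h0.symm
  set t := Real.sqrt T with ht
  have htpos : 0 < t := Real.sqrt_pos.2 hTpos
  have htsq : t ^ 2 = T := Real.sq_sqrt hTnn
  have htm : t < m := by
    apply lt_of_pow_lt_pow_left₀ 2 hmpos.le; rw [htsq]; exact hTm
  have htr : t < r := lt_of_lt_of_le htm (min_le_left _ _)
  have htδ : t < δ₁ / 2 := lt_of_lt_of_le htm (min_le_right _ _)
  set ω : Fin d → ℝ := fun i => -(w i).im / t with hω
  have hω1 : ∑ i, ω i ^ 2 = 1 := by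
    simp only [hω, div_pow, neg_sq, htsq]
    rw [← Finset.sum_div, ← hT, div_self hTpos.ne']
  obtain ⟨s, hs1, hs⟩ := hsup ω hω1
  set h : Fin d → ℂ := realVec s + Complex.I • realVec ω with hh
  have hhn : ‖h‖ ≤ 2 := by
    calc ‖h‖ ≤ ‖realVec s‖ + ‖Complex.I • realVec ω‖ := norm_add_le _ _
      _ ≤ 1 + 1 := by
        rw [norm_smul, Complex.norm_I, one_mul]
        exact add_le_add (coord_le_one hs1) (coord_le_one hω1.le)
      _ = 2 := by norm_num
  rw [iteratedFDeriv_two_apply] at hs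
  simp only [Matrix.cons_val_zero, Matrix.cons_val_one] at hs
  -- the real point
  have hpt : w + (t : ℂ) • h = realVec (fun i => (w i).re + t * s i) := by
    funext i
    apply Complex.ext
    · simp [hh, realVec]
    · simp [hh, realVec, hω]
      field_simp
      ring
  -- membership
  have hmem1 : ∀ τ ∈ Metric.ball (0 : ℂ) r,
      (w + τ • h, realVec p) ∈ Metric.closedBall q₀ (R / 2) := by
    intro τ hτ
    have hτ' : ‖τ • h‖ ≤ r * 2 := by
      rw [norm_smul]
      exact mul_le_mul (by simpa using (mem_ball_zero_iff.1 hτ).le) hhn (norm_nonneg _) hrpos.le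
    have : dist (w + τ • h, realVec p) (w, realVec p) ≤ r * 2 := by
      simpa [Prod.dist_eq, dist_eq_norm, hrpos.le] using hτ'
    rw [Metric.mem_closedBall]
    have := dist_triangle (w + τ • h, realVec p) (w, realVec p) q₀
    linarith
  have hmem2 : ∀ τ ∈ Metric.ball (0 : ℂ) r,
      (realVec w₀ + τ • h, realVec p₀) ∈ Metric.closedBall q₀ (R / 2) := by
    intro τ hτ
    have hτ' : ‖τ • h‖ ≤ r * 2 := by
      rw [norm_smul]
      exact mul_le_mul (by simpa using (mem_ball_zero_iff.1 hτ).le) hhn (norm_nonneg _) hrpos.le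
    have : dist (realVec w₀ + τ • h, realVec p₀) q₀ ≤ r * 2 := by
      simpa [hq₀, Prod.dist_eq, dist_eq_norm, hrpos.le] using hτ'
    rw [Metric.mem_closedBall]
    linarith
  set D : ℂ → ℂ := fun τ => Φ (w + τ • h) (realVec p) - f (realVec w₀ + τ • h) with hD
  have hline : ∀ (a : Fin d → ℂ) (τ : ℂ), HasDerivAt (fun z : ℂ => a + z • h) h τ := by
    intro a τ
    simpa using ((hasDerivAt_id τ).smul_const h).const_add a
  have hDder : ∀ τ ∈ Metric.ball (0 : ℂ) r, HasDerivAt D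
      (fderiv ℂ (fun w => Φ w (realVec p)) (w + τ • h) h - fderiv ℂ f (realVec w₀ + τ • h) h) τ := by
    intro τ hτ
    have a1 := HasFDerivAt.comp_hasDerivAt τ
      (hslice _ _ (hKU (hmem1 τ hτ))).hasFDerivAt (hline w τ)
    have a2 := HasFDerivAt.comp_hasDerivAt τ
      (hslice _ _ (hKU (hmem2 τ hτ))).hasFDerivAt (hline (realVec w₀) τ)
    exact a1.sub a2
  have hD0 : HasDerivAt D 0 0 := by
    have := hDder 0 (Metric.mem_ball_self hrpos)
    rw [zero_smul, add_zero, add_zero, hfx, hw, hcrit _ hpV'] at this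
    simpa using this
  have hDb : ∀ τ ∈ Metric.ball (0 : ℂ) r, ‖D τ‖ ≤ C * r ^ 2 / 32 := by
    intro τ hτ
    have hdist : dist (w + τ • h, realVec p) (realVec w₀ + τ • h, realVec p₀) < δ₂ := by
      have e : dist (w + τ • h, realVec p) (realVec w₀ + τ • h, realVec p₀)
        = dist (w, realVec p) q₀ := by
        simp [hq₀, Prod.dist_eq]
      rw [e]; exact hdδ
    have := hucδ _ (hmem1 τ hτ) _ (hmem2 τ hτ) hdist
    rw [dist_eq_norm] at this
    exact this.le
  have htb : (t : ℂ) ∈ Metric.ball (0 : ℂ) r := by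
    rw [mem_ball_zero_iff, Complex.norm_real, Real.norm_eq_abs, abs_of_pos htpos]; exact htr
  have hA := schwarz_two hrpos
    (fun τ hτ => (hDder τ hτ).differentiableAt.differentiableWithinAt) hD0 hDb htb
  have hth : ‖(t : ℂ) • h‖ ≤ 2 * t := by
    rw [norm_smul, Complex.norm_real, Real.norm_eq_abs, abs_of_pos htpos]
    nlinarith
  have hB := hpe ((t : ℂ) • h) (by linarith)
  have hB' : C / 32 * ‖(t : ℂ) • h‖ ^ 2 ≤ C / 8 * t ^ 2 := by
    have : ‖(t : ℂ) • h‖ ^ 2 ≤ (2 * t) ^ 2 := by gcongr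
    nlinarith
  have hA' : 2 * (C * r ^ 2 / 32) * (‖(t : ℂ)‖ / r) ^ 2 = C / 16 * t ^ 2 := by
    rw [Complex.norm_real, Real.norm_eq_abs, abs_of_pos htpos]
    field_simp
    norm_num
  have hA2 := (Complex.abs_im_le_norm _).trans (hA.trans_eq hA')
  have hB2 := (Complex.abs_im_le_norm _).trans (hB.trans hB')
  have hpos : 0 ≤ (Φ (w + (t : ℂ) • h) (realVec p)).im := by
    rw [hpt]
    apply hIm
    rw [← hpt]
    exact hKU (hmem1 _ htb)
  have eQ : ((1 / 2 : ℂ) * fderiv ℂ (fderiv ℂ f) (realVec w₀) ((t : ℂ) • h) ((t : ℂ) • h)).im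
      = t ^ 2 / 2 * (fderiv ℂ (fderiv ℂ f) (realVec w₀) h h).im := by
    have : (1 / 2 : ℂ) * fderiv ℂ (fderiv ℂ f) (realVec w₀) ((t : ℂ) • h) ((t : ℂ) • h)
      = ((t ^ 2 / 2 : ℝ) : ℂ) * fderiv ℂ (fderiv ℂ f) (realVec w₀) h h := by
      simp
      ring
    rw [this, Complex.im_ofReal_mul]
  simp only [hD, zero_smul, add_zero, Complex.sub_im] at hA2
  rw [Complex.sub_im, Complex.sub_im, eQ] at hB2
  have hA3 := (abs_le.1 hA2).2
  have hB3 := (abs_le.1 hB2).2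
  have hTC : t ^ 2 / 2 * (fderiv ℂ (fderiv ℂ f) (realVec w₀) h h).im ≤ t ^ 2 / 2 * (-C) := by
    apply mul_le_mul_of_nonneg_left _ (by positivity)
    linarith
  rw [← htsq]
  nlinarith [mul_pos hC (pow_pos htpos 2)]
end
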